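/- Let (X,f) be a TDS and let μ₁, μ₂ ∈ E(X,f) be ergodic measures with h_{μ₁}(f) > h_{μ₂}(f). Then μ = ½μ₁ + ½μ₂ is f-invariant and satisfies E_μ(f) = h_{μ₁}(f) while h_μ(f) = ½(h_{μ₁}(f) + h_{μ₂}(f)); in particular E_μ(f) > h_μ(f), so the inequality E_μ(f) ≥ h_μ(f) can be strict. -/

import Mathlib

open MeasureTheory Filter Set
open scoped ENNReal NNReal

namespace Paper

variable {X : Type*}

/-- Birkhoff sum `S_n φ(x) = ∑_{i<n} φ(f^i x)`. -/
def birk (f : X → X) (φ : X → ℝ) (n : ℕ) (x : X) : ℝ :=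
  ∑ i ∈ Finset.range n, φ (f^[i] x)

section Metric

variable [MetricSpace X]

/-- The Bowen ball `B_n(x, ε) = {y : d_n(x,y) < ε}`. -/
def bowenBall (f : X → X) (x : X) (n : ℕ) (ε : ℝ) : Set X :=
  {y | ∀ i < n, dist (f^[i] x) (f^[i] y) < ε}

/-- The number of indices `0 ≤ j ≤ n-1` with `dist (f^j x, f^j y) > ε`. -/
noncomputable def sepCount (f : X → X) (ε : ℝ) (n : ℕ) (x y : X) : ℕ :=
  Nat.card {j : ℕ // j < n ∧ ε < dist (f^[j] x) (f^[j] y)}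

/-- `A` is an `(n,ε)`-separated set. -/
def IsNSep (f : X → X) (n : ℕ) (ε : ℝ) (A : Set X) : Prop :=
  ∀ x ∈ A, ∀ y ∈ A, x ≠ y → ∃ j < n, ε < dist (f^[j] x) (f^[j] y)

/-- `A` is a `(δ,n,ε)`-separated set. -/
def IsDeltaSep (f : X → X) (δ : ℝ) (n : ℕ) (ε : ℝ) (A : Set X) : Prop :=
  ∀ x ∈ A, ∀ y ∈ A, x ≠ y → δ * n ≤ (sepCount f ε n x y : ℝ)

end Metric

section Entropy

variable [MeasurableSpace X]

/-- A finite measurable partition of `X`. -/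
def IsFinPartition (s : Finset (Set X)) : Prop :=
  (∀ A ∈ s, MeasurableSet A) ∧ ⋃₀ (s : Set (Set X)) = Set.univ ∧
    (s : Set (Set X)).Pairwise Disjoint

/-- The entropy `H(μ, ⋁_{i<n} f^{-i} ξ)` of the `n`-th dynamical refinement of the
partition `s` (with the convention `0 · log 0 = 0`). -/
noncomputable def dynH (f : X → X) (μ : Measure X) (s : Finset (Set X)) (n : ℕ) : ℝ :=
  -∑ w : Fin n → {A // A ∈ s},
      (μ (⋂ i : Fin n, f^[(i : ℕ)] ⁻¹' ((w i : Set X)))).toReal *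
        Real.log (μ (⋂ i : Fin n, f^[(i : ℕ)] ⁻¹' ((w i : Set X)))).toReal

/-- The Kolmogorov–Sinai entropy `h_μ(f)`, as an extended real:
`sup_ξ lim_n H(μ, ξ^n)/n`. -/
noncomputable def ksEntropy (f : X → X) (μ : Measure X) : EReal :=
  ⨆ (s : Finset (Set X)) (_ : IsFinPartition s),
    Filter.atTop.liminf (fun n : ℕ => ((dynH f μ s n / n : ℝ) : EReal))

end Entropy

section Pressure

variable [MetricSpace X] [MeasurableSpace X]

/-- Brin–Katok local entropy `h_μ(x) = lim_{ε→0} liminf_n -(1/n) log μ(B_n(x,ε))`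
(the limit in `ε` being a supremum by monotonicity). -/
noncomputable def localEntropy (f : X → X) (μ : Measure X) (x : X) : EReal :=
  ⨆ (ε : ℝ) (_ : 0 < ε),
    Filter.atTop.liminf (fun n : ℕ =>
      (((n : ℝ)⁻¹ : ℝ) : EReal) * (-(μ (bowenBall f x n ε)).log))

/-- The point-wise measure theoretic pressure
`P_μ(f,φ,x) = lim_{ε→0} liminf_n (1/n)[-log μ(B_n(x,ε)) + S_nφ(x)]`. -/
noncomputable def ptPressure (f : X → X) (φ : X → ℝ) (μ : Measure X) (x : X) : EReal :=
  ⨆ (ε : ℝ) (_ : 0 < ε),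
    Filter.atTop.liminf (fun n : ℕ =>
      (((n : ℝ)⁻¹ : ℝ) : EReal) * (-(μ (bowenBall f x n ε)).log + ((birk f φ n x : ℝ) : EReal)))

/-- `M(Z,φ,α,N,ε)`: infimum of `∑_i exp(-α n_i + S_{n_i}φ(x_i))` over countable covers
of `Z` by Bowen balls `B_{n_i}(x_i,ε)` with `n_i ≥ N`. -/
noncomputable def Mcov (f : X → X) (φ : X → ℝ) (Z : Set X) (α : ℝ) (N : ℕ) (ε : ℝ) : ℝ≥0∞ :=
  ⨅ (c : ℕ → X × ℕ)
    (_ : (∀ i, N ≤ (c i).2) ∧ Z ⊆ ⋃ i, bowenBall f (c i).1 (c i).2 ε),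
      ∑' i, ENNReal.ofReal (Real.exp (-α * ((c i).2 : ℝ) + birk f φ (c i).2 (c i).1))

/-- `m(Z,φ,α,ε) = lim_{N→∞} M(Z,φ,α,N,ε)` (a supremum, by monotonicity in `N`). -/
noncomputable def mZ (f : X → X) (φ : X → ℝ) (Z : Set X) (α : ℝ) (ε : ℝ) : ℝ≥0∞ :=
  ⨆ N : ℕ, Mcov f φ Z α N ε

/-- `P_Z(f,φ,ε) = inf {α : m(Z,φ,α,ε) = 0}`, the jump-up point of `α ↦ m(Z,φ,α,ε)`. -/
noncomputable def PZeps (f : X → X) (φ : X → ℝ) (Z : Set X) (ε : ℝ) : EReal :=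
  ⨅ (α : ℝ) (_ : mZ f φ Z α ε = 0), ((α : ℝ) : EReal)

/-- The topological pressure `P_Z(f,φ) = lim_{ε→0} P_Z(f,φ,ε)` on an arbitrary set `Z`
(the limit in `ε` being a supremum by monotonicity). -/
noncomputable def PZ (f : X → X) (φ : X → ℝ) (Z : Set X) : EReal :=
  ⨆ (ε : ℝ) (_ : 0 < ε), PZeps f φ Z ε

/-- The measure theoretic pressure
`P_μ(f,φ) = lim_{ε→0} inf {P_Z(f,φ,ε) : Z Borel, μ(Z) = 1}`. -/
noncomputable def Pmu (f : X → X) (φ : X → ℝ) (μ : Measure X) : EReal :=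
  ⨆ (ε : ℝ) (_ : 0 < ε),
    ⨅ (Z : Set X) (_ : MeasurableSet Z ∧ μ Z = 1), PZeps f φ Z ε

end Pressure

end Paper

open Paper

namespace PaperAux

/-! ### Entropy of finite-valued maps -/

lemma gibbs {ι : Type*} [Fintype ι] (p q : ι → ℝ) (hp : ∀ i, 0 ≤ p i) (hq : ∀ i, 0 ≤ q i)
    (hpq : ∀ i, p i ≠ 0 → q i ≠ 0) (hsum : ∑ i, q i ≤ ∑ i, p i) :
    -∑ i, p i * Real.log (p i) ≤ -∑ i, p i * Real.log (q i) := by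
  have key : ∀ i, p i * Real.log (q i) - p i * Real.log (p i) ≤ q i - p i := by
    intro i
    by_cases h0 : p i = 0
    · simp [h0, hq i]
    · have hp0 : 0 < p i := lt_of_le_of_ne (hp i) (Ne.symm h0)
      have hq0 : 0 < q i := lt_of_le_of_ne (hq i) (Ne.symm (hpq i h0))
      have h1 := Real.log_le_sub_one_of_pos (div_pos hq0 hp0)
      rw [Real.log_div hq0.ne' hp0.ne'] at h1
      have h2 := mul_le_mul_of_nonneg_left h1 hp0.le
      have h3 : p i * (q i / p i - 1) = q i - p i := by field_simp
      rw [h3] at h2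
      linarith
  have h := Finset.sum_le_sum (fun i (_ : i ∈ Finset.univ) => key i)
  rw [Finset.sum_sub_distrib, Finset.sum_sub_distrib] at h
  linarith

variable {X : Type*} [MeasurableSpace X]

noncomputable def ent {ι : Type*} [Fintype ι] (μ : Measure X) (φ : X → ι) : ℝ :=
  -∑ i, μ.real (φ ⁻¹' {i}) * Real.log (μ.real (φ ⁻¹' {i}))

def FM {ι : Type*} (φ : X → ι) : Prop := ∀ i, MeasurableSet (φ ⁻¹' {i})

lemma FM.measurableSet {ι : Type*} [Countable ι] {φ : X → ι} (h : FM φ) (s : Set ι) :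
    MeasurableSet (φ ⁻¹' s) := by
  let _ : MeasurableSpace ι := ⊤
  exact measurable_to_countable' h trivial

lemma FM.comp_measurable {ι β : Type*} [Countable ι] [MeasurableSpace β] {φ : X → ι} (h : FM φ)
    (F : ι → β) : Measurable (fun x => F (φ x)) := by
  intro s _
  exact h.measurableSet (F ⁻¹' s)

lemma FM.prod {ι κ : Type*} {φ : X → ι} {ψ : X → κ} (h : FM φ) (h' : FM ψ) :
    FM (fun x => (φ x, ψ x)) := by
  rintro ⟨i, j⟩
  convert (h i).inter (h' j) using 1
  ext x; simp

lemma FM.of_fun {ι κ : Type*} [Countable κ] {ψ : X → κ} (h : FM ψ) (π : κ → ι) :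
    FM (fun x => π (ψ x)) := fun i => h.measurableSet (π ⁻¹' {i})

lemma FM.comp {ι : Type*} {φ : X → ι} (h : FM φ) {f : X → X} (hf : Measurable f) :
    FM (fun x => φ (f x)) := fun i => hf (h i)

lemma integral_fin {ι : Type*} [Fintype ι] (μ : Measure X) [IsFiniteMeasure μ] {φ : X → ι}
    (h : FM φ) (F : ι → ℝ) :
    ∫ x, F (φ x) ∂μ = ∑ i, μ.real (φ ⁻¹' {i}) * F i := by
  let _ : MeasurableSpace ι := ⊤
  have : MeasurableSingletonClass ι := ⟨fun _ => trivial⟩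
  have hm : Measurable φ := measurable_to_countable' h
  have hF : Measurable F := measurable_from_top
  rw [← integral_map (f := F) hm.aemeasurable hF.aestronglyMeasurable, integral_fintype]
  · refine Finset.sum_congr rfl fun i _ => ?_
    rw [map_measureReal_apply hm trivial, smul_eq_mul]
  · exact Integrable.of_finite

lemma integrable_fin {ι : Type*} [Finite ι] (μ : Measure X) [IsFiniteMeasure μ] {φ : X → ι}
    (h : FM φ) (F : ι → ℝ) : Integrable (fun x => F (φ x)) μ := by
  let _ : MeasurableSpace ι := ⊤
  have : MeasurableSingletonClass ι := ⟨fun _ => trivial⟩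
  have hm : Measurable φ := measurable_to_countable' h
  have : Integrable F (μ.map φ) := Integrable.of_finite
  exact this.comp_measurable hm

lemma sum_prob {ι : Type*} [Fintype ι] (μ : Measure X) [IsProbabilityMeasure μ] {φ : X → ι}
    (h : FM φ) : ∑ i, μ.real (φ ⁻¹' {i}) = 1 := by
  have := integral_fin μ h (fun _ => 1)
  simpa using this.symm

lemma prob_refine {ι κ : Type*} [Fintype ι] [Fintype κ] [DecidableEq ι]
    (μ : Measure X) [IsFiniteMeasure μ] {ψ : X → κ} (h : FM ψ) (π : κ → ι) (i : ι) :
    μ.real ((fun x => π (ψ x)) ⁻¹' {i}) =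
      ∑ j with π j = i, μ.real (ψ ⁻¹' {j}) := by
  have h1 := integral_fin μ h (fun j => if π j = i then 1 else 0)
  simp only [mul_ite, mul_one, mul_zero] at h1
  rw [Finset.sum_filter, ← h1]
  have : (fun x => if π (ψ x) = i then (1 : ℝ) else 0) =
      ((fun x => π (ψ x)) ⁻¹' {i}).indicator 1 := by
    funext x
    by_cases hx : π (ψ x) = i <;> simp [hx]
  rw [this, integral_indicator_one ((h.of_fun π) i)]

lemma ent_eq_integral {ι : Type*} [Fintype ι] (μ : Measure X) [IsFiniteMeasure μ] {φ : X → ι}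
    (h : FM φ) : ent μ φ = ∫ x, -Real.log (μ.real (φ ⁻¹' {φ x})) ∂μ := by
  rw [integral_fin μ h (fun i => -Real.log (μ.real (φ ⁻¹' {i}))), ent]
  simp

lemma ent_nonneg {ι : Type*} [Fintype ι] (μ : Measure X) [IsProbabilityMeasure μ] (φ : X → ι) :
    0 ≤ ent μ φ := by
  rw [ent, neg_nonneg]
  exact Finset.sum_nonpos fun i _ => mul_nonpos_of_nonneg_of_nonpos measureReal_nonneg
    (Real.log_nonpos measureReal_nonneg measureReal_le_one)

lemma ent_le_gibbs {ι : Type*} [Fintype ι] (μ : Measure X) [IsProbabilityMeasure μ] {φ : X → ι}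
    (h : FM φ) (q : ι → ℝ) (hq : ∀ i, 0 ≤ q i) (hsum : ∑ i, q i ≤ 1)
    (hpos : ∀ i, μ.real (φ ⁻¹' {i}) ≠ 0 → q i ≠ 0) :
    ent μ φ ≤ ∑ i, μ.real (φ ⁻¹' {i}) * (-Real.log (q i)) := by
  have := gibbs (fun i => μ.real (φ ⁻¹' {i})) q (fun i => measureReal_nonneg) hq hpos
    (by rw [sum_prob μ h]; exact hsum)
  simpa [ent] using this

lemma ent_le_integral {ι : Type*} [Fintype ι] (μ : Measure X) [IsProbabilityMeasure μ] {φ : X → ι}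
    (h : FM φ) (q : ι → ℝ) (hq : ∀ i, 0 ≤ q i) (hsum : ∑ i, q i ≤ 1) (G : X → ℝ)
    (hG : Integrable G μ) (hle : ∀ x, Real.exp (-G x) ≤ q (φ x)) :
    ent μ φ ≤ ∫ x, G x ∂μ := by
  have hpos : ∀ x, 0 < q (φ x) := fun x => (Real.exp_pos _).trans_le (hle x)
  refine (ent_le_gibbs μ h q hq hsum ?_).trans ?_
  · intro i hi
    have : (φ ⁻¹' {i}).Nonempty := by
      by_contra hne
      rw [Set.not_nonempty_iff_eq_empty] at hne
      simp [hne] at hi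
    obtain ⟨x, rfl⟩ := this
    exact (hpos x).ne'
  · rw [← integral_fin μ h (fun i => -Real.log (q i))]
    refine integral_mono (integrable_fin μ h (fun i => -Real.log (q i))) hG fun x => ?_
    have := (Real.le_log_iff_exp_le (hpos x)).2 (hle x)
    simp only
    linarith

lemma ent_refine {ι κ : Type*} [Fintype ι] [Fintype κ] (μ : Measure X) [IsFiniteMeasure μ]
    {ψ : X → κ} (h : FM ψ) (π : κ → ι) : ent μ (fun x => π (ψ x)) ≤ ent μ ψ := by
  classical
  rw [ent, ent, neg_le_neg_iff]
  calc ∑ j, μ.real (ψ ⁻¹' {j}) * Real.log (μ.real (ψ ⁻¹' {j}))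
      ≤ ∑ j, μ.real (ψ ⁻¹' {j}) * Real.log (μ.real ((fun x => π (ψ x)) ⁻¹' {π j})) := by
        refine Finset.sum_le_sum fun j _ => ?_
        rcases (measureReal_nonneg (μ := μ) (s := ψ ⁻¹' {j})).eq_or_lt with h0 | h0
        · simp [← h0]
        · refine mul_le_mul_of_nonneg_left (Real.log_le_log h0 ?_) h0.le
          refine measureReal_mono ?_
          intro x hx
          simp only [Set.mem_preimage, Set.mem_singleton_iff] at hx ⊢
          rw [hx]
    _ = _ := by
        rw [← Finset.sum_fiberwise (s := Finset.univ) (g := π)]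
        refine Finset.sum_congr rfl fun i _ => ?_
        nth_rewrite 1 [prob_refine μ h π i]
        rw [Finset.sum_mul]
        refine Finset.sum_congr rfl fun j hj => ?_
        rw [(Finset.mem_filter.1 hj).2]

lemma ent_pair {ι κ : Type*} [Fintype ι] [Fintype κ] (μ : Measure X) [IsProbabilityMeasure μ]
    {φ : X → ι} {ψ : X → κ} (h : FM φ) (h' : FM ψ) :
    ent μ (fun x => (φ x, ψ x)) ≤ ent μ φ + ent μ ψ := by
  have hp := h.prod h'
  have hsub1 : ∀ z : ι × κ, (fun x => (φ x, ψ x)) ⁻¹' {z} ⊆ φ ⁻¹' {z.1} := by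
    rintro ⟨i, j⟩ x hx
    simp only [Set.mem_preimage, Set.mem_singleton_iff, Prod.mk.injEq] at hx ⊢
    exact hx.1
  have hsub2 : ∀ z : ι × κ, (fun x => (φ x, ψ x)) ⁻¹' {z} ⊆ ψ ⁻¹' {z.2} := by
    rintro ⟨i, j⟩ x hx
    simp only [Set.mem_preimage, Set.mem_singleton_iff, Prod.mk.injEq] at hx ⊢
    exact hx.2
  have hpos : ∀ z : ι × κ, μ.real ((fun x => (φ x, ψ x)) ⁻¹' {z}) ≠ 0 →
      0 < μ.real (φ ⁻¹' {z.1}) ∧ 0 < μ.real (ψ ⁻¹' {z.2}) := by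
    intro z hz
    have h0 := lt_of_le_of_ne measureReal_nonneg (Ne.symm hz)
    exact ⟨h0.trans_le (measureReal_mono (hsub1 z)), h0.trans_le (measureReal_mono (hsub2 z))⟩
  refine (ent_le_gibbs μ hp (fun z => μ.real (φ ⁻¹' {z.1}) * μ.real (ψ ⁻¹' {z.2}))
    (fun z => mul_nonneg measureReal_nonneg measureReal_nonneg) ?_ ?_).trans ?_
  · rw [Fintype.sum_prod_type]
    simp_rw [← Finset.mul_sum]
    rw [sum_prob μ h']
    simp [sum_prob μ h]
  · intro z hz
    exact (mul_pos (hpos z hz).1 (hpos z hz).2).ne'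
  · have : ∀ z : ι × κ, μ.real ((fun x => (φ x, ψ x)) ⁻¹' {z}) *
        (-Real.log (μ.real (φ ⁻¹' {z.1}) * μ.real (ψ ⁻¹' {z.2}))) =
        μ.real ((fun x => (φ x, ψ x)) ⁻¹' {z}) *
        (-Real.log (μ.real (φ ⁻¹' {z.1})) + -Real.log (μ.real (ψ ⁻¹' {z.2}))) := by
      intro z
      by_cases hz : μ.real ((fun x => (φ x, ψ x)) ⁻¹' {z}) = 0
      · simp [hz]
      · rw [Real.log_mul (hpos z hz).1.ne' (hpos z hz).2.ne']
        ring
    simp_rw [this]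
    rw [← integral_fin μ hp (fun z => -Real.log (μ.real (φ ⁻¹' {z.1})) +
      -Real.log (μ.real (ψ ⁻¹' {z.2}))), ent_eq_integral μ h, ent_eq_integral μ h',
      integral_add (integrable_fin μ h (fun i => -Real.log (μ.real (φ ⁻¹' {i}))))
      (integrable_fin μ h' (fun i => -Real.log (μ.real (ψ ⁻¹' {i}))))]

lemma ent_comp {ι : Type*} [Fintype ι] (μ : Measure X) {φ : X → ι} (h : FM φ)
    {f : X → X} (hf : MeasurePreserving f μ μ) : ent μ (fun x => φ (f x)) = ent μ φ := by
  unfold ent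
  congr 1
  refine Finset.sum_congr rfl fun i _ => ?_
  have : (fun x => φ (f x)) ⁻¹' {i} = f ⁻¹' (φ ⁻¹' {i}) := rfl
  rw [this, hf.measureReal_preimage (h i).nullMeasurableSet]

/-! ### The half-half mixture -/

noncomputable abbrev mix (μ₁ μ₂ : Measure X) : Measure X :=
  (2 : ℝ≥0∞)⁻¹ • μ₁ + (2 : ℝ≥0∞)⁻¹ • μ₂

instance mix_prob (μ₁ μ₂ : Measure X) [IsProbabilityMeasure μ₁] [IsProbabilityMeasure μ₂] :
    IsProbabilityMeasure (mix μ₁ μ₂) := by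
  constructor
  simp [mix, ENNReal.inv_two_add_inv_two]

lemma mix_mp {f : X → X} {μ₁ μ₂ : Measure X} (h₁ : MeasurePreserving f μ₁ μ₁)
    (h₂ : MeasurePreserving f μ₂ μ₂) : MeasurePreserving f (mix μ₁ μ₂) (mix μ₁ μ₂) := by
  refine ⟨h₁.measurable, ?_⟩
  rw [mix, Measure.map_add _ _ h₁.measurable, Measure.map_smul, Measure.map_smul, h₁.map_eq,
    h₂.map_eq]

lemma mix_real (μ₁ μ₂ : Measure X) [IsProbabilityMeasure μ₁] [IsProbabilityMeasure μ₂]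
    (A : Set X) : (mix μ₁ μ₂).real A = (μ₁.real A + μ₂.real A) / 2 := by
  have h1 : (2 : ℝ≥0∞)⁻¹ * μ₁ A ≠ ⊤ := ENNReal.mul_ne_top (by simp) (measure_ne_top _ _)
  have h2 : (2 : ℝ≥0∞)⁻¹ * μ₂ A ≠ ⊤ := ENNReal.mul_ne_top (by simp) (measure_ne_top _ _)
  simp only [Measure.real, mix, Measure.coe_add, Measure.coe_smul, Pi.add_apply, Pi.smul_apply,
    smul_eq_mul]
  rw [ENNReal.toReal_add h1 h2, ENNReal.toReal_mul, ENNReal.toReal_mul]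
  simp
  ring

lemma ent_mix_ge {ι : Type*} [Fintype ι] (μ₁ μ₂ : Measure X) [IsProbabilityMeasure μ₁]
    [IsProbabilityMeasure μ₂] {φ : X → ι} (h : FM φ) :
    (ent μ₁ φ + ent μ₂ φ) / 2 ≤ ent (mix μ₁ μ₂) φ := by
  have a1 := ent_le_gibbs μ₁ h (fun i => (mix μ₁ μ₂).real (φ ⁻¹' {i}))
    (fun i => measureReal_nonneg) (sum_prob _ h).le (by
      intro i hi
      rw [mix_real]
      have h1 := lt_of_le_of_ne measureReal_nonneg (Ne.symm hi)
      have h2 : 0 ≤ μ₂.real (φ ⁻¹' {i}) := measureReal_nonneg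
      positivity)
  have a2 := ent_le_gibbs μ₂ h (fun i => (mix μ₁ μ₂).real (φ ⁻¹' {i}))
    (fun i => measureReal_nonneg) (sum_prob _ h).le (by
      intro i hi
      rw [mix_real]
      have h1 := lt_of_le_of_ne measureReal_nonneg (Ne.symm hi)
      have h2 : 0 ≤ μ₁.real (φ ⁻¹' {i}) := measureReal_nonneg
      positivity)
  have : ent (mix μ₁ μ₂) φ =
      (∑ i, μ₁.real (φ ⁻¹' {i}) * (-Real.log ((mix μ₁ μ₂).real (φ ⁻¹' {i}))) +
      ∑ i, μ₂.real (φ ⁻¹' {i}) * (-Real.log ((mix μ₁ μ₂).real (φ ⁻¹' {i})))) / 2 := by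
    rw [← Finset.sum_add_distrib, Finset.sum_div, ent, ← Finset.sum_neg_distrib]
    refine Finset.sum_congr rfl fun i _ => ?_
    nth_rewrite 1 [mix_real]
    ring
  rw [this]
  linarith

lemma ent_mix_le {ι : Type*} [Fintype ι] (μ₁ μ₂ : Measure X) [IsProbabilityMeasure μ₁]
    [IsProbabilityMeasure μ₂] {φ : X → ι} (h : FM φ) :
    ent (mix μ₁ μ₂) φ ≤ (ent μ₁ φ + ent μ₂ φ) / 2 + Real.log 2 := by
  have key : ∀ p r : ℝ, 0 ≤ p → 0 ≤ r →
      p * -Real.log ((p + r) / 2) ≤ p * -Real.log p + p * Real.log 2 := by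
    intro p r hp hr
    rcases hp.eq_or_lt with h0 | h0
    · simp [← h0]
    · have := Real.log_le_log h0 (by linarith : p ≤ p + r)
      rw [Real.log_div (by positivity) (by norm_num), ← mul_add]
      exact mul_le_mul_of_nonneg_left (by linarith) hp
  have e1 : ent (mix μ₁ μ₂) φ =
      ∑ i, (μ₁.real (φ ⁻¹' {i}) * (-Real.log ((mix μ₁ μ₂).real (φ ⁻¹' {i}))) +
        μ₂.real (φ ⁻¹' {i}) * (-Real.log ((mix μ₁ μ₂).real (φ ⁻¹' {i})))) / 2 := by
    rw [ent, ← Finset.sum_neg_distrib]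
    refine Finset.sum_congr rfl fun i _ => ?_
    nth_rewrite 1 [mix_real]
    ring
  have e2 : (ent μ₁ φ + ent μ₂ φ) / 2 + Real.log 2 =
      ∑ i, ((μ₁.real (φ ⁻¹' {i}) * -Real.log (μ₁.real (φ ⁻¹' {i})) +
        μ₁.real (φ ⁻¹' {i}) * Real.log 2) + (μ₂.real (φ ⁻¹' {i}) *
        -Real.log (μ₂.real (φ ⁻¹' {i})) + μ₂.real (φ ⁻¹' {i}) * Real.log 2)) / 2 := by
    rw [← Finset.sum_div, Finset.sum_add_distrib, Finset.sum_add_distrib,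
      Finset.sum_add_distrib, ← Finset.sum_mul, ← Finset.sum_mul, sum_prob μ₁ h, sum_prob μ₂ h]
    simp only [mul_neg, Finset.sum_neg_distrib, ent]
    ring
  rw [e1, e2]
  refine Finset.sum_le_sum fun i _ => ?_
  have k1 := key (μ₁.real (φ ⁻¹' {i})) (μ₂.real (φ ⁻¹' {i})) measureReal_nonneg measureReal_nonneg
  have k2 := key (μ₂.real (φ ⁻¹' {i})) (μ₁.real (φ ⁻¹' {i})) measureReal_nonneg measureReal_nonneg
  rw [add_comm (μ₂.real (φ ⁻¹' {i}))] at k2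
  rw [mix_real]
  linarith

/-! ### Names, partitions, and Kolmogorov–Sinai entropy -/

def nm {S : Type*} (f : X → X) (g : X → S) (n : ℕ) (x : X) : Fin n → S :=
  fun i => g (f^[(i : ℕ)] x)

lemma FM.nm {S : Type*} {f : X → X} (hf : Measurable f) {g : X → S} (hg : FM g) (n : ℕ) :
    FM (nm f g n) := by
  intro w
  have : PaperAux.nm f g n ⁻¹' {w} = ⋂ i : Fin n, f^[(i : ℕ)] ⁻¹' (g ⁻¹' {w i}) := by
    ext x
    simp [PaperAux.nm, funext_iff]
  rw [this]
  exact MeasurableSet.iInter fun i => (hf.iterate i) (hg (w i))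

lemma exists_fun_of_part {s : Finset (Set X)} (hs : IsFinPartition s) :
    ∃ g : X → {A // A ∈ s}, FM g ∧ (∀ x, x ∈ (g x : Set X)) ∧
      ∀ (f : X → X) (μ : Measure X) (n : ℕ), dynH f μ s n = ent μ (nm f g n) := by
  obtain ⟨hm, hcov, hdis⟩ := hs
  have hex : ∀ x : X, ∃ A : {A // A ∈ s}, x ∈ (A : Set X) := by
    intro x
    have : x ∈ ⋃₀ (s : Set (Set X)) := by rw [hcov]; trivial
    obtain ⟨A, hA, hx⟩ := this
    exact ⟨⟨A, hA⟩, hx⟩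
  choose g hg using hex
  have hfib : ∀ A : {A // A ∈ s}, g ⁻¹' {A} = (A : Set X) := by
    intro A
    ext x
    simp only [Set.mem_preimage, Set.mem_singleton_iff]
    constructor
    · rintro rfl
      exact hg x
    · intro hx
      by_contra hne
      have := hdis (g x).2 A.2 (fun h => hne (Subtype.ext h))
      exact Set.disjoint_left.1 this (hg x) hx
  refine ⟨g, fun A => by rw [hfib A]; exact hm _ A.2, hg, fun f μ n => ?_⟩
  unfold dynH ent
  congr 1
  refine Finset.sum_congr rfl fun w _ => ?_
  have : (⋂ i : Fin n, f^[(i : ℕ)] ⁻¹' ((w i : Set X))) = nm f g n ⁻¹' {w} := by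
    ext x
    simp only [Set.mem_iInter, Set.mem_preimage, Set.mem_singleton_iff, funext_iff, nm]
    refine forall_congr' fun i => ?_
    rw [← hfib (w i)]
    simp
  rw [this]
  rfl

lemma exists_part_of_fun {S : Type*} [Fintype S] {g : X → S} (hg : FM g) :
    ∃ s : Finset (Set X), IsFinPartition s ∧ ∀ A ∈ s, ∃ a, A = g ⁻¹' {a} := by
  classical
  refine ⟨Finset.univ.image (fun a => g ⁻¹' {a}), ⟨?_, ?_, ?_⟩, ?_⟩
  · intro A hA
    obtain ⟨a, -, rfl⟩ := Finset.mem_image.1 hA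
    exact hg a
  · ext x
    simp
  · intro A hA B hB hne
    obtain ⟨a, -, rfl⟩ := Finset.mem_image.1 hA
    obtain ⟨b, -, rfl⟩ := Finset.mem_image.1 hB
    refine Set.disjoint_left.2 fun x hx hy => hne ?_
    simp only [Set.mem_preimage, Set.mem_singleton_iff] at hx hy
    rw [← hx, ← hy]
  · intro A hA
    obtain ⟨a, -, rfl⟩ := Finset.mem_image.1 hA
    exact ⟨a, rfl⟩

lemma ent_nm_refine {S T : Type*} [Fintype S] [Fintype T] (μ : Measure X) [IsFiniteMeasure μ]
    {f : X → X} (hf : Measurable f) {h : X → T} (hh : FM h) (π : T → S) (n : ℕ) :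
    ent μ (nm f (fun x => π (h x)) n) ≤ ent μ (nm f h n) :=
  ent_refine μ (hh.nm hf n) (fun w i => π (w i))

lemma le_ks {S : Type*} [Fintype S] (μ : Measure X) [IsFiniteMeasure μ]
    {f : X → X} (hf : Measurable f) {g : X → S} (hg : FM g) :
    Filter.atTop.liminf (fun n : ℕ => ((ent μ (nm f g n) / n : ℝ) : EReal)) ≤ ksEntropy f μ := by
  obtain ⟨s, hs, hsg⟩ := exists_part_of_fun hg
  obtain ⟨g', hg', hmem, hdyn⟩ := exists_fun_of_part hs
  refine le_trans ?_ (le_iSup₂ (f := fun (s : Finset (Set X)) (_ : IsFinPartition s) =>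
    Filter.atTop.liminf (fun n : ℕ => ((dynH f μ s n / n : ℝ) : EReal))) s hs)
  choose π hπ using hsg
  have hgg : g = fun x => π (g' x : Set X) (g' x).2 := by
    funext x
    have := hmem x
    have h2 := hπ (g' x : Set X) (g' x).2
    have h3 : x ∈ g ⁻¹' {π (g' x : Set X) (g' x).2} := h2 ▸ this
    exact h3
  refine liminf_le_liminf (Eventually.of_forall fun n => ?_)
  rw [hdyn]
  refine EReal.coe_le_coe_iff.2 (div_le_div_of_nonneg_right ?_ (Nat.cast_nonneg n))
  rw [hgg]
  exact ent_nm_refine μ hf hg' (fun A => π (A : Set X) A.2) n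

lemma ent_subadd {S : Type*} [Fintype S] (μ : Measure X) [IsProbabilityMeasure μ]
    {f : X → X} (hf : MeasurePreserving f μ μ) {g : X → S} (hg : FM g) :
    Subadditive (fun n => ent μ (nm f g n)) := by
  intro m n
  have hm := hg.nm hf.measurable m
  have hn := hg.nm hf.measurable n
  have hn' := hn.comp (hf.measurable.iterate m)
  let π : (Fin m → S) × (Fin n → S) → (Fin (m + n) → S) := fun z => Fin.append z.1 z.2
  have e : nm f g (m + n) = fun x => π (nm f g m x, nm f g n (f^[m] x)) := by
    funext x i
    refine Fin.addCases (fun i => ?_) (fun i => ?_) i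
    · simp [π, nm]
    · simp only [π, nm, Fin.append_right, Fin.val_natAdd, ← Function.iterate_add_apply]
      rw [add_comm]
  have h1 := ent_refine μ (hm.prod hn') π
  have h2 := ent_pair μ hm hn'
  have h3 := ent_comp μ hn (hf.iterate m)
  rw [← e] at h1
  linarith

lemma ent_tendsto {S : Type*} [Fintype S] (μ : Measure X) [IsProbabilityMeasure μ]
    {f : X → X} (hf : MeasurePreserving f μ μ) {g : X → S} (hg : FM g) :
    ∃ L : ℝ, 0 ≤ L ∧ Tendsto (fun n : ℕ => ent μ (nm f g n) / n) atTop (nhds L) := by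
  have h := (ent_subadd μ hf hg).tendsto_lim ⟨0, by
    rintro _ ⟨n, rfl⟩
    exact div_nonneg (ent_nonneg _ _) (Nat.cast_nonneg n)⟩
  exact ⟨_, ge_of_tendsto' h fun n => div_nonneg (ent_nonneg _ _) (Nat.cast_nonneg n), h⟩

lemma liminf_coe {u : ℕ → ℝ} {L : ℝ} (h : Tendsto u atTop (nhds L)) :
    Filter.atTop.liminf (fun n : ℕ => ((u n : ℝ) : EReal)) = (L : EReal) :=
  ((continuous_coe_real_ereal.tendsto L).comp h).liminf_eq

lemma ks_nonneg (μ : Measure X) [IsProbabilityMeasure μ]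
    {f : X → X} (hf : MeasurePreserving f μ μ) : 0 ≤ ksEntropy f μ := by
  have hg : FM (fun _ : X => ()) := fun _ => by simp
  obtain ⟨L, h0, hL⟩ := ent_tendsto μ hf hg
  refine le_trans ?_ (le_ks μ hf.measurable hg)
  rw [liminf_coe hL]
  exact_mod_cast h0

lemma ks_mix (μ₁ μ₂ : Measure X) [IsProbabilityMeasure μ₁] [IsProbabilityMeasure μ₂]
    {f : X → X} (hf₁ : MeasurePreserving f μ₁ μ₁) (hf₂ : MeasurePreserving f μ₂ μ₂)
    {h₁ h₂ : ℝ} (e₁ : ksEntropy f μ₁ = h₁) (e₂ : ksEntropy f μ₂ = h₂) :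
    ksEntropy f (mix μ₁ μ₂) = (((h₁ + h₂) / 2 : ℝ) : EReal) := by
  have hm := mix_mp hf₁ hf₂
  apply le_antisymm
  · refine iSup₂_le fun s hs => ?_
    obtain ⟨g, hg, -, hdyn⟩ := exists_fun_of_part hs
    obtain ⟨L₁, -, hL₁⟩ := ent_tendsto μ₁ hf₁ hg
    obtain ⟨L₂, -, hL₂⟩ := ent_tendsto μ₂ hf₂ hg
    obtain ⟨L, -, hL⟩ := ent_tendsto (mix μ₁ μ₂) hm hg
    have k₁ := le_ks μ₁ hf₁.measurable hg
    have k₂ := le_ks μ₂ hf₂.measurable hg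
    rw [liminf_coe hL₁, e₁] at k₁
    rw [liminf_coe hL₂, e₂] at k₂
    have k₁ := EReal.coe_le_coe_iff.1 k₁
    have k₂ := EReal.coe_le_coe_iff.1 k₂
    simp_rw [hdyn]
    rw [liminf_coe hL]
    refine EReal.coe_le_coe_iff.2 ?_
    have ht : Tendsto (fun n : ℕ => (ent μ₁ (nm f g n) / n + ent μ₂ (nm f g n) / n) / 2 +
        Real.log 2 / n) atTop (nhds ((L₁ + L₂) / 2 + 0)) :=
      ((hL₁.add hL₂).div_const 2).add (tendsto_const_div_atTop_nhds_zero_nat _)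
    have := le_of_tendsto_of_tendsto' hL ht fun n => by
      have := div_le_div_of_nonneg_right (ent_mix_le μ₁ μ₂ (hg.nm hf₁.measurable n))
        (Nat.cast_nonneg (α := ℝ) n)
      refine this.trans (le_of_eq ?_)
      ring
    linarith
  · refine le_of_forall_lt fun c hc => ?_
    obtain ⟨d, hcd, hd⟩ := EReal.lt_iff_exists_real_btwn.1 hc
    have hd' := EReal.coe_lt_coe_iff.1 hd
    set δ := (h₁ + h₂) / 2 - d with hδ
    have hδ0 : 0 < δ := by linarith
    have l₁ : ((h₁ - δ : ℝ) : EReal) < ksEntropy f μ₁ := by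
      rw [e₁]; exact EReal.coe_lt_coe_iff.2 (by linarith)
    have l₂ : ((h₂ - δ : ℝ) : EReal) < ksEntropy f μ₂ := by
      rw [e₂]; exact EReal.coe_lt_coe_iff.2 (by linarith)
    simp only [ksEntropy, lt_iSup_iff] at l₁ l₂
    obtain ⟨s₁, hs₁, l₁⟩ := l₁
    obtain ⟨s₂, hs₂, l₂⟩ := l₂
    obtain ⟨g₁, hg₁, -, hdyn₁⟩ := exists_fun_of_part hs₁
    obtain ⟨g₂, hg₂, -, hdyn₂⟩ := exists_fun_of_part hs₂
    simp_rw [hdyn₁] at l₁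
    simp_rw [hdyn₂] at l₂
    have hg := hg₁.prod hg₂
    obtain ⟨L₁, -, hL₁⟩ := ent_tendsto μ₁ hf₁ hg₁
    obtain ⟨L₂, -, hL₂⟩ := ent_tendsto μ₂ hf₂ hg₂
    obtain ⟨L, -, hL⟩ := ent_tendsto (mix μ₁ μ₂) hm hg
    rw [liminf_coe hL₁] at l₁
    rw [liminf_coe hL₂] at l₂
    have l₁ := EReal.coe_lt_coe_iff.1 l₁
    have l₂ := EReal.coe_lt_coe_iff.1 l₂
    have k := le_ks (mix μ₁ μ₂) hf₁.measurable hg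
    rw [liminf_coe hL] at k
    refine hcd.trans (lt_of_lt_of_le (EReal.coe_lt_coe_iff.2 ?_) k)
    have := le_of_tendsto_of_tendsto' ((hL₁.add hL₂).div_const 2) hL fun n => by
      have a := ent_mix_ge μ₁ μ₂ (hg.nm hf₁.measurable n)
      have a₁ := ent_nm_refine μ₁ hf₁.measurable hg Prod.fst n
      have a₂ := ent_nm_refine μ₂ hf₁.measurable hg Prod.snd n
      have : (ent μ₁ (nm f g₁ n) + ent μ₂ (nm f g₂ n)) / 2 ≤
          ent (mix μ₁ μ₂) (nm f (fun x => (g₁ x, g₂ x)) n) := by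
        simp only at a₁ a₂
        linarith
      have := div_le_div_of_nonneg_right this (Nat.cast_nonneg (α := ℝ) n)
      refine le_trans (le_of_eq ?_) this
      ring
    linarith

/-! ### The coding argument for the lower bound -/

section Coding

variable {S J : Type*} [Fintype J]

noncomputable def U (e : S → S → ℝ) (p : J → ℝ) (tm : J → S × List S) :
    (n : ℕ) → List S → (Fin n → S) → ℝ
  | 0, _, _ => 1
  | n + 1, a :: l, w => e a (w 0) * U e p tm n l (Fin.tail w)
  | n + 1, [], w => ∑ j, p j * (e (tm j).1 (w 0) * U e p tm n (tm j).2 (Fin.tail w))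

lemma U_nonneg {e : S → S → ℝ} {p : J → ℝ} {tm : J → S × List S} (he : ∀ a b, 0 ≤ e a b)
    (hp : ∀ j, 0 ≤ p j) : ∀ (n : ℕ) (l : List S) (w : Fin n → S), 0 ≤ U e p tm n l w := by
  intro n
  induction n with
  | zero => intro l w; simp [U]
  | succ n ih =>
    intro l w
    cases l with
    | nil =>
      rw [U]
      exact Finset.sum_nonneg fun j _ => mul_nonneg (hp j) (mul_nonneg (he _ _) (ih _ _))
    | cons a l =>
      rw [U]
      exact mul_nonneg (he _ _) (ih _ _)

lemma sum_cons [Fintype S] (n : ℕ) (F : S → (Fin n → S) → ℝ) :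
    ∑ w : Fin (n + 1) → S, F (w 0) (Fin.tail w) = ∑ a, ∑ w, F a w := by
  rw [← Fintype.sum_prod_type']
  refine (Fintype.sum_equiv (Fin.consEquiv (fun _ => S)) _ _ ?_).symm
  rintro ⟨a, w⟩
  simp [Fin.consEquiv]

lemma U_sum [Fintype S] {e : S → S → ℝ} {p : J → ℝ} {tm : J → S × List S}
    (he : ∀ a b, 0 ≤ e a b) (hes : ∀ a, ∑ b, e a b ≤ 1)
    (hp : ∀ j, 0 ≤ p j) (hps : ∑ j, p j ≤ 1) :
    ∀ (n : ℕ) (l : List S), ∑ w, U e p tm n l w ≤ 1 := by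
  intro n
  induction n with
  | zero => intro l; simp [U]
  | succ n ih =>
    have key : ∀ (a : S) (l : List S),
        ∑ w : Fin (n + 1) → S, e a (w 0) * U e p tm n l (Fin.tail w) ≤ 1 := by
      intro a l
      rw [sum_cons n (fun b w => e a b * U e p tm n l w)]
      simp_rw [← Finset.mul_sum]
      rw [← Finset.sum_mul]
      exact mul_le_one₀ (hes a) (Finset.sum_nonneg fun w _ => U_nonneg he hp _ _ _) (ih l)
    intro l
    cases l with
    | nil =>
      simp_rw [U]
      rw [Finset.sum_comm]
      simp_rw [← Finset.mul_sum]
      refine le_trans (Finset.sum_le_sum fun j _ => ?_) hps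
      exact mul_le_of_le_one_right (hp j) (key _ _)
    | cons a l =>
      simp_rw [U]
      exact key a l

def Mt (f : X → X) (g : X → S) (G : Set X) : List S → X → Prop
  | [], _ => True
  | a :: l, x => (x ∈ G → a = g x) ∧ Mt f g G l (f x)

lemma U_lower {e : S → S → ℝ} {p : J → ℝ} {tm : J → S × List S} (he : ∀ a b, 0 ≤ e a b)
    (hp : ∀ j, 0 ≤ p j) {f : X → X} {g : X → S} {G : Set X} {C : X → ℝ} {α L : ℝ}
    (hα : 0 ≤ α)
    (hC : ∀ a x, (x ∈ G → a = g x) → Real.exp (-C x) ≤ e a (g x))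
    (hblock : ∀ x, ∃ j, (((tm j).2.length : ℝ) ≤ L) ∧ Mt f g G (tm j).2 (f x) ∧
      Real.exp (-C x - α * ((tm j).2.length + 1)) ≤ p j * e (tm j).1 (g x)) :
    ∀ (n : ℕ) (l : List S) (x : X), (l.length : ℝ) ≤ L → Mt f g G l x →
      Real.exp (-(birkhoffSum f C n x) - α * (n - l.length + L)) ≤
        U e p tm n l (nm f g n x) := by
  have htail : ∀ n x, Fin.tail (nm f g (n + 1) x) = nm f g n (f x) := fun n x => rfl
  have hzero : ∀ n x, nm f g (n + 1) x 0 = g x := fun n x => rfl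
  intro n
  induction n with
  | zero =>
    intro l x hl _
    rw [U, ← Real.exp_zero]
    refine Real.exp_le_exp.2 ?_
    have : 0 ≤ α * (L - l.length) := mul_nonneg hα (by linarith)
    simp only [birkhoffSum_zero, Nat.cast_zero]
    linarith
  | succ n ih =>
    intro l x hl hm
    cases l with
    | nil =>
      obtain ⟨j, hj, hjm, hje⟩ := hblock x
      have h2 := ih _ _ hj hjm
      rw [U]
      refine le_trans ?_ (Finset.single_le_sum (f := fun j => p j * (e (tm j).1 (nm f g (n + 1) x 0)
        * U e p tm n (tm j).2 (Fin.tail (nm f g (n + 1) x))))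
        (fun j _ => mul_nonneg (hp j) (mul_nonneg (he _ _) (U_nonneg he hp _ _ _)))
        (Finset.mem_univ j))
      simp only [htail, hzero]
      rw [← mul_assoc]
      refine le_trans (le_of_eq ?_) (mul_le_mul hje h2 (Real.exp_pos _).le
        (mul_nonneg (hp j) (he _ _)))
      rw [← Real.exp_add, birkhoffSum_succ']
      congr 1
      push_cast
      simp only [List.length_nil, Nat.cast_zero]
      ring
    | cons a l =>
      obtain ⟨h1, h3⟩ := hm
      have hl' : (l.length : ℝ) ≤ L := by
        simp only [List.length_cons] at hl
        push_cast at hl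
        linarith
      have h2 := ih _ _ hl' h3
      rw [U, htail, hzero]
      refine le_trans (le_of_eq ?_) (mul_le_mul (hC a x h1) h2 (Real.exp_pos _).le (he _ _))
      rw [← Real.exp_add, birkhoffSum_succ']
      congr 1
      simp only [List.length_cons]
      push_cast
      ring

end Coding

lemma birkhoff_integral (μ : Measure X) {f : X → X} (hf : MeasurePreserving f μ μ) {C : X → ℝ}
    (hC : Integrable C μ) (n : ℕ) :
    Integrable (birkhoffSum f C n) μ ∧ ∫ x, birkhoffSum f C n x ∂μ = n * ∫ x, C x ∂μ := by
  have hi : ∀ i, Integrable (fun x => C (f^[i] x)) μ := fun i =>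
    (hf.iterate i).integrable_comp_of_integrable hC
  constructor
  · unfold birkhoffSum
    exact integrable_finsetSum _ fun i _ => hi i
  · unfold birkhoffSum
    rw [integral_finsetSum _ fun i _ => hi i]
    have : ∀ i, ∫ x, C (f^[i] x) ∂μ = ∫ x, C x ∂μ := by
      intro i
      have hmp := hf.iterate i
      have h2 := integral_map (μ := μ) (f := C) hmp.measurable.aemeasurable
        (by rw [hmp.map_eq]; exact hC.aestronglyMeasurable)
      rw [hmp.map_eq] at h2
      exact h2.symm
    simp [this]

lemma coding_bound {S J : Type*} [Fintype S] [Fintype J] (μ : Measure X) [IsProbabilityMeasure μ]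
    {f : X → X} (hf : MeasurePreserving f μ μ)
    {e : S → S → ℝ} {p : J → ℝ} {tm : J → S × List S} (he : ∀ a b, 0 ≤ e a b)
    (hes : ∀ a, ∑ b, e a b ≤ 1) (hp : ∀ j, 0 ≤ p j) (hps : ∑ j, p j ≤ 1)
    {g : X → S} (hg : FM g) {G : Set X} {C : X → ℝ} (hCi : Integrable C μ) {α L : ℝ}
    (hα : 0 ≤ α) (hL : 0 ≤ L)
    (hC : ∀ a x, (x ∈ G → a = g x) → Real.exp (-C x) ≤ e a (g x))
    (hblock : ∀ x, ∃ j, (((tm j).2.length : ℝ) ≤ L) ∧ Mt f g G (tm j).2 (f x) ∧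
      Real.exp (-C x - α * ((tm j).2.length + 1)) ≤ p j * e (tm j).1 (g x)) :
    Filter.atTop.liminf (fun n : ℕ => ((ent μ (nm f g n) / n : ℝ) : EReal)) ≤
      ((α + ∫ x, C x ∂μ : ℝ) : EReal) := by
  have hb : ∀ n : ℕ, ent μ (nm f g n) ≤ n * ∫ x, C x ∂μ + α * (n + L) := by
    intro n
    obtain ⟨h1, h2⟩ := birkhoff_integral μ hf hCi n
    have := ent_le_integral μ (hg.nm hf.measurable n) (U e p tm n []) (U_nonneg he hp n [])
      (U_sum he hes hp hps n []) (fun x => birkhoffSum f C n x + α * (n + L))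
      (h1.add (integrable_const _)) (fun x => by
        have := U_lower he hp hα hC hblock n [] x (by simpa using hL) trivial
        refine le_trans (le_of_eq ?_) this
        congr 1
        simp
        ring)
    rw [integral_add h1 (integrable_const _), h2] at this
    simpa using this
  obtain ⟨l, -, hl⟩ := ent_tendsto μ hf hg
  rw [liminf_coe hl]
  refine EReal.coe_le_coe_iff.2 ?_
  have ht : Tendsto (fun n : ℕ => α + ∫ x, C x ∂μ + (α * L) / n) atTop
      (nhds (α + ∫ x, C x ∂μ + 0)) :=
    tendsto_const_nhds.add (tendsto_const_div_atTop_nhds_zero_nat _)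
  rw [add_zero] at ht
  refine le_of_tendsto_of_tendsto hl ht ?_
  filter_upwards [eventually_gt_atTop 0] with n hn
  have hn' : (0 : ℝ) < n := by exact_mod_cast hn
  rw [div_le_iff₀ hn']
  refine (hb n).trans (le_of_eq ?_)
  field_simp
  ring

/-! ### Lower bound for the pressure -/

section Lower

variable {X : Type*} [MetricSpace X]

lemma Mt_iterate {S : Type*} {f : X → X} {g : X → S} {G : Set X} {σ : X → S} {ε : ℝ}
    (hσ : ∀ x y, y ∈ G → dist x y < ε → σ x = g y) :
    ∀ (n : ℕ) (z y : X), y ∈ bowenBall f z n ε → Mt f g G ((List.iterate f z n).map σ) y := by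
  intro n
  induction n with
  | zero => intro z y _; trivial
  | succ n ih =>
    intro z y hy
    refine ⟨fun hG => hσ z y hG (hy 0 (Nat.succ_pos n)), ih (f z) (f y) fun i hi => ?_⟩
    exact hy (i + 1) (by omega)

lemma isOpen_bowenBall {f : X → X} (hf : Continuous f) (x : X) (n : ℕ) (ε : ℝ) :
    IsOpen (bowenBall f x n ε) := by
  have : bowenBall f x n ε = ⋂ i ∈ Set.Iio n, {y | dist (f^[i] x) (f^[i] y) < ε} := by
    ext y; simp [bowenBall]
  rw [this]
  refine (Set.finite_Iio n).isOpen_biInter fun i _ => ?_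
  exact isOpen_lt (continuous_const.dist (hf.iterate i)) continuous_const

variable [CompactSpace X] [MeasurableSpace X] [BorelSpace X]

lemma exists_good {S : Type*} [Fintype S] (μ : Measure X) [IsProbabilityMeasure μ]
    {g : X → S} (hg : FM g) {δ : ℝ} (hδ : 0 < δ) :
    ∃ G : Set X, MeasurableSet G ∧ μ.real Gᶜ ≤ δ ∧ ∃ ε : ℝ, 0 < ε ∧ ∃ σ : X → S,
      ∀ x y, y ∈ G → dist x y < ε → σ x = g y := by
  classical
  have hne : Nonempty S := by
    obtain ⟨x⟩ := nonempty_of_isProbabilityMeasure μ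
    exact ⟨g x⟩
  set k : ℝ := ((Fintype.card S : ℕ) : ℝ) with hk
  have hk0 : 0 < k := by
    rw [hk]
    exact_mod_cast Fintype.card_pos
  have hF : ∀ a, ∃ F ⊆ g ⁻¹' {a}, IsClosed F ∧ μ (g ⁻¹' {a} \ F) < ENNReal.ofReal (δ / k) :=
    fun a => (hg a).exists_isClosed_sdiff_lt (measure_ne_top _ _)
      (ENNReal.ofReal_pos.2 (div_pos hδ hk0)).ne'
  choose F hFsub hFc hFm using hF
  refine ⟨⋃ a, F a, MeasurableSet.iUnion fun a => (hFc a).measurableSet, ?_, ?_⟩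
  · calc μ.real (⋃ a, F a)ᶜ ≤ μ.real (⋃ a, (g ⁻¹' {a} \ F a)) := by
          refine measureReal_mono ?_
          intro x hx
          simp only [Set.mem_compl_iff, Set.mem_iUnion, not_exists] at hx
          exact Set.mem_iUnion.2 ⟨g x, rfl, hx _⟩
      _ ≤ ∑ a, μ.real (g ⁻¹' {a} \ F a) := measureReal_iUnion_fintype_le _
      _ ≤ ∑ a : S, δ / k := by
          refine Finset.sum_le_sum fun a _ => ?_
          exact ENNReal.toReal_le_of_le_ofReal (div_pos hδ hk0).le (hFm a).le
      _ = δ := by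
          simp only [Finset.sum_const, Finset.card_univ, nsmul_eq_mul]
          rw [← hk]
          field_simp
  · have hev : ∀ᶠ ε in nhdsWithin (0 : ℝ) (Set.Ioi 0), ∀ a b, a ≠ b →
        Disjoint (Metric.thickening ε (F a)) (Metric.thickening ε (F b)) := by
      rw [eventually_all]
      intro a
      rw [eventually_all]
      intro b
      by_cases hab : a = b
      · exact Eventually.of_forall fun _ h => absurd hab h
      have hd : Disjoint (F a) (F b) := by
        refine Set.disjoint_left.2 fun x hx hy => hab ?_
        have h1 := hFsub a hx
        have h2 := hFsub b hy
        simp only [Set.mem_preimage, Set.mem_singleton_iff] at h1 h2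
        rw [← h1, ← h2]
      obtain ⟨r, hr, hdr⟩ := hd.exists_thickenings (hFc a).isCompact (hFc b)
      filter_upwards [Ioo_mem_nhdsGT hr] with ε hε _
      exact hdr.mono (Metric.thickening_mono hε.2.le _) (Metric.thickening_mono hε.2.le _)
    obtain ⟨ε, hε, hε0⟩ := (hev.and self_mem_nhdsWithin).exists
    refine ⟨ε, hε0, fun x => if h : ∃ y, y ∈ (⋃ a, F a) ∧ dist x y < ε then g h.choose else g x, ?_⟩
    intro x y hy hxy
    have hyF : ∀ y, y ∈ ⋃ a, F a → y ∈ F (g y) := by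
      intro y hy
      obtain ⟨a, ha⟩ := Set.mem_iUnion.1 hy
      have : g y = a := hFsub a ha
      rw [this]
      exact ha
    have h : ∃ y, y ∈ (⋃ a, F a) ∧ dist x y < ε := by
      exact ⟨y, hy, hxy⟩
    simp only [h, dif_pos]
    have hc := h.choose_spec
    by_contra hne
    have m1 : x ∈ Metric.thickening ε (F (g h.choose)) :=
      Metric.mem_thickening_iff.2 ⟨_, hyF _ hc.1, hc.2⟩
    have m2 : x ∈ Metric.thickening ε (F (g y)) :=
      Metric.mem_thickening_iff.2 ⟨_, hyF _ hy, hxy⟩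
    exact Set.disjoint_left.1 (hε _ _ hne) m1 m2

lemma lower_bound {S : Type*} [Fintype S] (μ : Measure X) [IsProbabilityMeasure μ]
    {f : X → X} (hfc : Continuous f) (hf : MeasurePreserving f μ μ)
    {g : X → S} (hg : FM g) {γ : ℝ} (hγ : 0 < γ) :
    ∃ ε : ℝ, 0 < ε ∧ ∀ Z : Set X, μ Z = 1 → ∀ α : ℝ, mZ f (fun _ => 0) Z α ε = 0 →
      Filter.atTop.liminf (fun n : ℕ => ((ent μ (nm f g n) / n : ℝ) : EReal)) ≤
        ((α + γ : ℝ) : EReal) := by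
  classical
  obtain ⟨x0⟩ := nonempty_of_isProbabilityMeasure μ
  have hne : Nonempty S := ⟨g x0⟩
  set k : ℝ := ((Fintype.card S : ℕ) : ℝ) with hk
  have hk1 : 1 ≤ k := by
    rw [hk]
    exact_mod_cast Fintype.card_pos
  have hk0 : 0 < k := by linarith
  set β : ℝ := 1 - Real.exp (-(γ / 3)) with hβ
  have hβ0 : 0 < β := by
    have : Real.exp (-(γ / 3)) < 1 := by
      rw [← Real.exp_zero]
      exact Real.exp_lt_exp.2 (by linarith)
    linarith
  have hβ1 : β < 1 := by
    have := Real.exp_pos (-(γ / 3))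
    linarith
  set c1 : ℝ := Real.log (k / β) with hc1
  have hc1e : Real.exp (-c1) = β / k := by
    rw [hc1, Real.exp_neg, Real.exp_log (by positivity), inv_div]
  have hc10 : 0 ≤ c1 := Real.log_nonneg (by rw [le_div_iff₀ hβ0]; linarith)
  set c0 : ℝ := c1 + Real.log 2 with hc0
  have hl2 : 0 < Real.log 2 := Real.log_pos (by norm_num)
  have hc00 : 0 ≤ c0 := by linarith
  have hc0e : Real.exp (-c0) = 1 / 2 * (β / k) := by
    rw [hc0, neg_add, Real.exp_add, hc1e, Real.exp_neg, Real.exp_log (by norm_num)]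
    ring
  let e : S → S → ℝ := fun a b => (1 - β) * (if a = b then 1 else 0) + β / k
  have hbk : 0 ≤ β / k := by positivity
  have he : ∀ a b, 0 ≤ e a b := by
    intro a b
    simp only [e]
    split_ifs
    · linarith
    · linarith
  have he1 : ∀ a b, Real.exp (-c1) ≤ e a b := by
    intro a b
    rw [hc1e]
    simp only [e]
    split_ifs
    · linarith
    · linarith
  have he2 : ∀ a, Real.exp (-(γ / 3)) ≤ e a a := by
    intro a
    simp only [e, if_true]
    linarith
  have hes : ∀ a, ∑ b, e a b ≤ 1 := by
    intro a
    simp only [e]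
    rw [Finset.sum_add_distrib, ← Finset.mul_sum]
    simp only [Finset.sum_ite_eq, Finset.mem_univ, if_true, Finset.sum_const, Finset.card_univ,
      nsmul_eq_mul]
    rw [← hk]
    field_simp
    linarith
  obtain ⟨G, hGm, hGμ, ε, hε, σ, hσ⟩ := exists_good μ hg (δ := γ / (3 * (c1 + 1))) (by positivity)
  refine ⟨ε, hε, fun Z hZ α hm => ?_⟩
  have hM : Mcov f (fun _ => 0) Z α 1 ε < 2⁻¹ := by
    refine lt_of_le_of_lt (le_iSup (fun N : ℕ => Mcov f (fun _ => 0) Z α N ε) 1) ?_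
    change mZ f (fun _ => 0) Z α ε < 2⁻¹
    rw [hm]
    simp
  simp only [Mcov, iInf_lt_iff] at hM
  obtain ⟨c, ⟨hc, hcov⟩, hsum⟩ := hM
  simp only [birk, Finset.sum_const_zero, add_zero] at hsum
  have hfin : ∀ t : Finset ℕ, ∑ i ∈ t, Real.exp (-α * ((c i).2 : ℝ)) < 1 / 2 := by
    intro t
    have h1 := lt_of_le_of_lt (ENNReal.sum_le_tsum t) hsum
    rw [← ENNReal.ofReal_sum_of_nonneg (fun i _ => (Real.exp_pos _).le)] at h1
    have h2 : (2 : ℝ≥0∞)⁻¹ = ENNReal.ofReal (1 / 2) := by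
      rw [one_div, ENNReal.ofReal_inv_of_pos (by norm_num)]
      simp
    rw [h2] at h1
    exact (ENNReal.ofReal_lt_ofReal_iff (by norm_num)).1 h1
  have hα : 0 ≤ α := by
    by_contra hneg
    have h1 := hfin {0}
    simp only [Finset.sum_singleton] at h1
    have : 1 ≤ Real.exp (-α * ((c 0).2 : ℝ)) :=
      Real.one_le_exp (mul_nonneg (by linarith) (Nat.cast_nonneg _))
    linarith
  let B : ℕ → Set X := fun i => bowenBall f (c i).1 (c i).2 ε
  have hBm : ∀ i, MeasurableSet (B i) := fun i => (isOpen_bowenBall hfc _ _ _).measurableSet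
  have hBμ : μ (⋃ i, B i) = 1 := le_antisymm prob_le_one (hZ ▸ measure_mono hcov)
  obtain ⟨M, hMμ⟩ : ∃ M : ℕ, μ.real (Set.accumulate B M)ᶜ ≤ γ / (3 * (c0 + 1)) := by
    have ht := tendsto_measure_iUnion_accumulate (μ := μ) (f := B)
    rw [hBμ] at ht
    have ht' := (ENNReal.tendsto_toReal (by simp)).comp ht
    have hlt : (1 : ℝ≥0∞).toReal - γ / (3 * (c0 + 1)) < (1 : ℝ≥0∞).toReal := by
      have : 0 < γ / (3 * (c0 + 1)) := by positivity
      linarith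
    obtain ⟨M, hM⟩ := (ht'.eventually (lt_mem_nhds hlt)).exists
    refine ⟨M, ?_⟩
    have hmeas : MeasurableSet (Set.accumulate B M) :=
      MeasurableSet.biUnion (Set.to_countable _) fun i _ => hBm i
    rw [probReal_compl_eq_one_sub hmeas]
    simp only [Function.comp, ENNReal.toReal_one] at hM
    simp only [Measure.real]
    linarith
  set K := Set.accumulate B M with hK
  have hKm : MeasurableSet K := MeasurableSet.biUnion (Set.to_countable _) fun i _ => hBm i
  let C : X → ℝ := fun x => γ / 3 + (Gᶜ.indicator (fun _ => c1) x + Kᶜ.indicator (fun _ => c0) x)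
  have i1 : Integrable (Gᶜ.indicator (fun _ => c1)) μ :=
    (integrable_const c1).indicator hGm.compl
  have i2 : Integrable (Kᶜ.indicator (fun _ => c0)) μ :=
    (integrable_const c0).indicator hKm.compl
  have i3 : Integrable (fun x => Gᶜ.indicator (fun _ => c1) x + Kᶜ.indicator (fun _ => c0) x) μ :=
    i1.add i2
  have hCi : Integrable C μ := (integrable_const _).add i3
  have hCint : ∫ x, C x ∂μ ≤ γ := by
    simp only [C]
    rw [integral_add (integrable_const _) i3, integral_add i1 i2,
      integral_indicator_const _ hGm.compl, integral_indicator_const _ hKm.compl]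
    simp only [integral_const, probReal_univ, smul_eq_mul, one_mul]
    have h1 : μ.real Gᶜ * c1 ≤ γ / 3 := by
      refine (mul_le_mul_of_nonneg_right hGμ hc10).trans ?_
      rw [div_mul_eq_mul_div, div_le_div_iff₀ (by positivity) (by norm_num)]
      nlinarith
    have h2 : μ.real Kᶜ * c0 ≤ γ / 3 := by
      refine (mul_le_mul_of_nonneg_right hMμ hc00).trans ?_
      rw [div_mul_eq_mul_div, div_le_div_iff₀ (by positivity) (by norm_num)]
      nlinarith
    linarith
  have n1 : ∀ x, 0 ≤ Gᶜ.indicator (fun _ => c1) x := fun x => Set.indicator_nonneg (fun _ _ => hc10) x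
  have n2 : ∀ x, 0 ≤ Kᶜ.indicator (fun _ => c0) x := fun x => Set.indicator_nonneg (fun _ _ => hc00) x
  let p : Option (Fin (M + 1)) → ℝ := fun j =>
    j.elim (1 / 2) (fun i => Real.exp (-α * ((c i).2 : ℝ)))
  let tm : Option (Fin (M + 1)) → S × List S := fun j =>
    j.elim (g x0, []) (fun i => (σ (c i).1, (List.iterate f (f (c i).1) ((c i).2 - 1)).map σ))
  have hp : ∀ j, 0 ≤ p j := by
    rintro (_ | i)
    · simp [p]
    · exact (Real.exp_pos _).le
  have hps : ∑ j, p j ≤ 1 := by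
    rw [Fintype.sum_option]
    have := hfin (Finset.range (M + 1))
    rw [Finset.sum_range] at this
    simp only [p, Option.elim]
    linarith
  have hCe : ∀ a x, (x ∈ G → a = g x) → Real.exp (-C x) ≤ e a (g x) := by
    intro a x hax
    by_cases hx : x ∈ G
    · rw [hax hx]
      refine le_trans (Real.exp_le_exp.2 ?_) (he2 (g x))
      have := n1 x
      have := n2 x
      simp only [C]
      linarith
    · refine le_trans (Real.exp_le_exp.2 ?_) (he1 a (g x))
      have h1 : Gᶜ.indicator (fun _ => c1) x = c1 := Set.indicator_of_mem hx _
      have := n2 x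
      simp only [C]
      linarith
  refine (coding_bound μ hf (p := p) (tm := tm) he hes hp hps hg (G := G) hCi (α := α)
    (L := ∑ i ∈ Finset.range (M + 1), ((c i).2 : ℝ)) hα
    (Finset.sum_nonneg fun i _ => Nat.cast_nonneg _) hCe ?_).trans
    (EReal.coe_le_coe_iff.2 (by linarith))
  intro x
  by_cases hx : x ∈ K
  · obtain ⟨i, hiM, hxi⟩ := Set.mem_accumulate.1 hx
    have hn := hc i
    obtain ⟨m, hmn⟩ : ∃ m, (c i).2 = m + 1 := ⟨(c i).2 - 1, by omega⟩
    have hxb : x ∈ bowenBall f (c i).1 (m + 1) ε := hmn ▸ hxi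
    have hmt := Mt_iterate hσ (m + 1) (c i).1 x hxb
    refine ⟨some ⟨i, by omega⟩, ?_, ?_, ?_⟩
    · simp only [tm, Option.elim, List.length_map, List.length_iterate]
      refine le_trans ?_ (Finset.single_le_sum (f := fun i => ((c i).2 : ℝ))
        (fun i _ => Nat.cast_nonneg _) (Finset.mem_range.2 (by omega : i < M + 1)))
      simp only [hmn]
      push_cast
      simp
    · simp only [tm, Option.elim, hmn, Nat.add_sub_cancel]
      exact hmt.2
    · simp only [tm, p, Option.elim, List.length_map, List.length_iterate, hmn, Nat.add_sub_cancel]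
      refine le_trans (le_of_eq ?_) (mul_le_mul_of_nonneg_left (hCe (σ (c i).1) x hmt.1)
        (Real.exp_pos _).le)
      rw [← Real.exp_add]
      congr 1
      push_cast
      ring
  · refine ⟨none, ?_, trivial, ?_⟩
    · simp only [tm, Option.elim, List.length_nil, Nat.cast_zero]
      exact Finset.sum_nonneg fun i _ => Nat.cast_nonneg _
    · simp only [tm, p, Option.elim, List.length_nil, Nat.cast_zero]
      have h1 : Real.exp (-C x - α * (0 + 1)) ≤ Real.exp (-c0) := by
        refine Real.exp_le_exp.2 ?_
        have h1 : Kᶜ.indicator (fun _ => c0) x = c0 := Set.indicator_of_mem hx _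
        have := n1 x
        simp only [C]
        linarith
      refine h1.trans ?_
      rw [hc0e, ← hc1e]
      exact mul_le_mul_of_nonneg_left (he1 _ _) (by norm_num)

end Lower

/-! ### Upper bound for the pressure -/

section Upper

variable {X : Type*} [MetricSpace X]

lemma mcov_le {ι : Type*} [Countable ι] [Infinite ι] {f : X → X} {Z : Set X} {α ε : ℝ} {N : ℕ}
    (c : ι → X × ℕ) (hc : ∀ i, N ≤ (c i).2) (hcov : Z ⊆ ⋃ i, bowenBall f (c i).1 (c i).2 ε) :
    Mcov f (fun _ => 0) Z α N ε ≤ ∑' i, ENNReal.ofReal (Real.exp (-α * ((c i).2 : ℝ))) := by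
  obtain ⟨hd⟩ := nonempty_denumerable ι
  let q : ℕ ≃ ι := (Denumerable.eqv ι).symm
  refine (iInf₂_le (fun n => c (q n)) ⟨fun n => hc _, ?_⟩).trans ?_
  · simp only [birk, Finset.sum_const_zero, add_zero]
    exact (q.tsum_eq (fun i => ENNReal.ofReal (Real.exp (-α * ((c i).2 : ℝ))))).le
  · intro x hx
    obtain ⟨i, hi⟩ := Set.mem_iUnion.1 (hcov hx)
    refine Set.mem_iUnion.2 ⟨q.symm i, ?_⟩
    simpa using hi

lemma mZ_union {f : X → X} {Z₁ Z₂ : Set X} {α ε : ℝ} (h₁ : mZ f (fun _ => 0) Z₁ α ε = 0)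
    (h₂ : mZ f (fun _ => 0) Z₂ α ε = 0) : mZ f (fun _ => 0) (Z₁ ∪ Z₂) α ε = 0 := by
  simp only [mZ, ENNReal.iSup_eq_zero] at h₁ h₂ ⊢
  intro N
  refine le_antisymm (ENNReal.le_of_forall_pos_le_add fun δ hδ _ => ?_) (zero_le)
  rw [zero_add]
  have hδ' : (0 : ℝ≥0∞) < (δ : ℝ≥0∞) / 2 := ENNReal.half_pos (by exact_mod_cast hδ.ne')
  have k₁ : Mcov f (fun _ => 0) Z₁ α N ε < δ / 2 := by rw [h₁ N]; exact hδ'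
  have k₂ : Mcov f (fun _ => 0) Z₂ α N ε < δ / 2 := by rw [h₂ N]; exact hδ'
  simp only [Mcov, iInf_lt_iff, birk, Finset.sum_const_zero, add_zero] at k₁ k₂
  obtain ⟨c₁, ⟨hN₁, hc₁⟩, k₁⟩ := k₁
  obtain ⟨c₂, ⟨hN₂, hc₂⟩, k₂⟩ := k₂
  refine (mcov_le (ι := ℕ ⊕ ℕ) (Sum.elim c₁ c₂) ?_ ?_).trans ?_
  · rintro (i | i)
    · exact hN₁ i
    · exact hN₂ i
  · rintro x (hx | hx)
    · obtain ⟨i, hi⟩ := Set.mem_iUnion.1 (hc₁ hx)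
      exact Set.mem_iUnion.2 ⟨Sum.inl i, hi⟩
    · obtain ⟨i, hi⟩ := Set.mem_iUnion.1 (hc₂ hx)
      exact Set.mem_iUnion.2 ⟨Sum.inr i, hi⟩
  · rw [Summable.tsum_sum ENNReal.summable ENNReal.summable]
    simp only [Sum.elim_inl, Sum.elim_inr]
    exact (add_le_add k₁.le k₂.le).trans (ENNReal.add_halves _).le

variable [MeasurableSpace X]

lemma cover_zero {S : Type*} [Fintype S] (ν : Measure X) [IsProbabilityMeasure ν]
    {f : X → X} (hf : Measurable f) {g : X → S} (hg : FM g) {ε b c : ℝ}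
    (hgε : ∀ x y, g x = g y → dist x y < ε) (hb : 0 ≤ b) (hbc : b < c) {Z : Set X}
    (hZ : ∀ x ∈ Z, ∀ N : ℕ, ∃ n ≥ N, Real.exp (-(n * b)) ≤ ν.real (nm f g n ⁻¹' {nm f g n x})) :
    mZ f (fun _ => 0) Z c ε = 0 := by
  classical
  obtain ⟨x0⟩ := nonempty_of_isProbabilityMeasure ν
  simp only [mZ, ENNReal.iSup_eq_zero]
  intro N
  refine le_antisymm (ENNReal.le_of_forall_pos_le_add fun δ hδ _ => ?_) (zero_le)
  rw [zero_add]
  have hδ' : (0 : ℝ≥0∞) < (δ : ℝ≥0∞) / 2 := ENNReal.half_pos (by exact_mod_cast hδ.ne')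
  let r : ℕ → ℝ≥0∞ := fun n => ENNReal.ofReal (Real.exp (-((c - b) * n)))
  have hr : ∑' n, r n ≠ ⊤ := by
    have hs : Summable (fun n : ℕ => Real.exp (-((c - b) * n))) := by
      have := Real.summable_exp_nat_mul_iff.2 (by linarith : b - c < 0)
      refine this.congr fun n => ?_
      congr 1
      ring
    exact hs.tsum_ofReal_ne_top
  have ht := ENNReal.tendsto_sum_nat_add r hr
  obtain ⟨N', hN', hNN⟩ := ((ht.eventually (gt_mem_nhds hδ')).and (eventually_ge_atTop N)).exists
  let ι := Σ n : ℕ, (Fin (n + N') → S)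
  have hinf : Infinite ι := Infinite.of_injective (fun n : ℕ => (⟨n, fun _ => g x0⟩ : ι))
    fun m n h => by
      simp only [ι, Sigma.mk.injEq] at h
      exact h.1
  obtain ⟨η, hη0, hηs⟩ := ENNReal.exists_pos_sum_of_countable hδ'.ne' ι
  have hpad : ∀ i : ι, ∃ n : ℕ, N ≤ n ∧ ENNReal.ofReal (Real.exp (-c * (n : ℝ))) ≤ η i := by
    intro i
    have h1 : Tendsto (fun n : ℕ => Real.exp (-c * (n : ℝ))) atTop (nhds 0) := by
      refine Real.tendsto_exp_atBot.comp ?_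
      exact tendsto_natCast_atTop_atTop.const_mul_atTop_of_neg (by linarith)
    have hpos : (0 : ℝ) < η i := hη0 i
    obtain ⟨n, hn, hn'⟩ := ((h1.eventually (gt_mem_nhds hpos)).and (eventually_ge_atTop N)).exists
    refine ⟨n, hn', ?_⟩
    rw [← ENNReal.ofReal_coe_nnreal]
    exact ENNReal.ofReal_le_ofReal hn.le
  choose pad hpadN hpadη using hpad
  let P : ι → ℝ := fun i => ν.real (nm f g (i.1 + N') ⁻¹' {i.2})
  have hrep : ∀ i : ι, ∃ x : X, Real.exp (-(((i.1 + N' : ℕ) : ℝ) * b)) ≤ P i →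
      nm f g (i.1 + N') x = i.2 := by
    intro i
    by_cases h : Real.exp (-(((i.1 + N' : ℕ) : ℝ) * b)) ≤ P i
    · have hne : (nm f g (i.1 + N') ⁻¹' {i.2}).Nonempty := by
        by_contra hne
        rw [Set.not_nonempty_iff_eq_empty] at hne
        simp only [P, hne, measureReal_empty] at h
        exact absurd (Real.exp_pos _) (not_lt.2 h)
      obtain ⟨x, hx⟩ := hne
      exact ⟨x, fun _ => hx⟩
    · exact ⟨x0, fun h' => absurd h' h⟩
  choose rep hrep using hrep
  let cc : ι → X × ℕ := fun i =>
    if Real.exp (-(((i.1 + N' : ℕ) : ℝ) * b)) ≤ P i then (rep i, i.1 + N') else (x0, pad i)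
  refine (mcov_le (ι := ι) cc ?_ ?_).trans ?_
  · intro i
    simp only [cc]
    split_ifs
    · simp only; omega
    · exact hpadN i
  · intro x hx
    obtain ⟨n, hn, hle⟩ := hZ x hx N'
    obtain ⟨m, rfl⟩ : ∃ m, n = m + N' := ⟨n - N', by omega⟩
    refine Set.mem_iUnion.2 ⟨⟨m, nm f g (m + N') x⟩, ?_⟩
    have hcond : Real.exp (-(((m + N' : ℕ) : ℝ) * b)) ≤ P ⟨m, nm f g (m + N') x⟩ := hle
    simp only [cc]
    rw [if_pos hcond]
    have := hrep ⟨m, nm f g (m + N') x⟩ hcond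
    intro i hi
    exact hgε _ _ (congrFun this ⟨i, hi⟩)
  · have hterm : ∀ i : ι, ENNReal.ofReal (Real.exp (-c * ((cc i).2 : ℝ))) ≤
        r (i.1 + N') * ENNReal.ofReal (P i) + η i := by
      intro i
      simp only [cc]
      split_ifs with h
      · refine le_trans ?_ le_self_add
        simp only [r]
        rw [← ENNReal.ofReal_mul (Real.exp_pos _).le]
        refine ENNReal.ofReal_le_ofReal ?_
        refine le_trans (le_of_eq ?_) (mul_le_mul_of_nonneg_left h (Real.exp_pos _).le)
        rw [← Real.exp_add]
        congr 1
        ring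
      · exact (hpadη i).trans le_add_self
    refine (ENNReal.tsum_le_tsum hterm).trans ?_
    rw [ENNReal.tsum_add, ENNReal.tsum_sigma']
    refine (add_le_add (le_of_eq ?_ |>.trans hN'.le) hηs.le).trans (ENNReal.add_halves _).le
    refine tsum_congr fun n => ?_
    change ∑' b : Fin (n + N') → S, r (n + N') *
      ENNReal.ofReal (ν.real (nm f g (n + N') ⁻¹' {b})) = r (n + N')
    rw [ENNReal.tsum_mul_left, tsum_fintype]
    rw [← ENNReal.ofReal_sum_of_nonneg (fun _ _ => measureReal_nonneg),
      sum_prob ν (hg.nm hf (n + N'))]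
    simp

lemma ae_pos {ι : Type*} [Fintype ι] (ν : Measure X) [IsFiniteMeasure ν] (φ : X → ι) :
    ∀ᵐ x ∂ν, 0 < ν.real (φ ⁻¹' {φ x}) := by
  have h : ∀ i, ∀ᵐ x ∂ν, φ x = i → 0 < ν.real (φ ⁻¹' {i}) := by
    intro i
    by_cases h0 : ν (φ ⁻¹' {i}) = 0
    · have : ∀ᵐ x ∂ν, x ∉ φ ⁻¹' {i} := measure_eq_zero_iff_ae_notMem.1 h0
      filter_upwards [this] with x hx hxi
      exact absurd hxi hx
    · exact Eventually.of_forall fun x _ => ENNReal.toReal_pos h0 (measure_ne_top _ _)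
  have h' := ae_all_iff.2 h
  filter_upwards [h'] with x hx
  exact hx _ rfl

lemma positive_set {S : Type*} [Fintype S] (ν : Measure X) [IsProbabilityMeasure ν]
    {f : X → X} (hf : MeasurePreserving f ν ν) {g : X → S} (hg : FM g) {a L : ℝ}
    (hL0 : 0 ≤ L) (hL : Tendsto (fun n : ℕ => ent ν (nm f g n) / n) atTop (nhds L)) (ha : L < a) :
    ¬ ∀ᵐ x ∂ν, ∀ᶠ n : ℕ in atTop, ν.real (nm f g n ⁻¹' {nm f g n x}) < Real.exp (-(n * a)) := by
  intro hae
  let I : ℕ → X → ℝ := fun n x => -Real.log (ν.real (nm f g n ⁻¹' {nm f g n x})) / n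
  have hI0 : ∀ n x, 0 ≤ I n x := fun n x => div_nonneg
    (neg_nonneg.2 (Real.log_nonpos measureReal_nonneg measureReal_le_one)) (Nat.cast_nonneg n)
  have hIm : ∀ n, Measurable (fun x => ENNReal.ofReal (I n x)) := fun n =>
    (hg.nm hf.measurable n).comp_measurable
      (fun w => ENNReal.ofReal (-Real.log (ν.real (nm f g n ⁻¹' {w})) / n))
  have hII : ∀ n, Integrable (I n) ν := fun n =>
    integrable_fin ν (hg.nm hf.measurable n)
      (fun w => -Real.log (ν.real (nm f g n ⁻¹' {w})) / n)
  have h_lint : ∀ n, ∫⁻ x, ENNReal.ofReal (I n x) ∂ν = ENNReal.ofReal (ent ν (nm f g n) / n) := by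
    intro n
    rw [← ofReal_integral_eq_lintegral_ofReal (hII n) (Eventually.of_forall (hI0 n)),
      ent_eq_integral ν (hg.nm hf.measurable n), ← integral_div]
  have hF := lintegral_liminf_le (μ := ν) (u := atTop) hIm
  simp_rw [h_lint] at hF
  have ht : Tendsto (fun n : ℕ => ENNReal.ofReal (ent ν (nm f g n) / n)) atTop
      (nhds (ENNReal.ofReal L)) := ENNReal.tendsto_ofReal hL
  rw [ht.liminf_eq] at hF
  have hpos : ∀ᵐ x ∂ν, ∀ n : ℕ, 0 < ν.real (nm f g n ⁻¹' {nm f g n x}) :=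
    ae_all_iff.2 fun n => ae_pos ν (nm f g n)
  have hlow : ENNReal.ofReal a ≤ ∫⁻ x, liminf (fun n => ENNReal.ofReal (I n x)) atTop ∂ν := by
    have : ∫⁻ _, ENNReal.ofReal a ∂ν = ENNReal.ofReal a := by simp
    rw [← this]
    refine lintegral_mono_ae ?_
    filter_upwards [hae, hpos] with x hx hx0
    refine le_liminf_of_le (by isBoundedDefault) ?_
    filter_upwards [hx, eventually_gt_atTop 0] with n hn hn0
    refine ENNReal.ofReal_le_ofReal ?_
    have hn' : (0 : ℝ) < n := by exact_mod_cast hn0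
    simp only [I]
    rw [le_div_iff₀ hn']
    have := (Real.log_lt_iff_lt_exp (hx0 n)).2 hn
    linarith
  have := (ENNReal.ofReal_le_ofReal_iff hL0).1 (hlow.trans hF)
  linarith

lemma exists_small_partition [CompactSpace X] [BorelSpace X] {ε : ℝ} (hε : 0 < ε) :
    ∃ (T : Finset X) (g : X → Set T), FM g ∧ ∀ x y, g x = g y → dist x y < ε := by
  obtain ⟨t, -, htf, ht⟩ := finite_cover_balls_of_compact (isCompact_univ (X := X))
    (half_pos hε)
  refine ⟨htf.toFinset, fun x => {p | dist x p < ε / 2}, ?_, ?_⟩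
  · intro A
    have : (fun x : X => {p : htf.toFinset | dist x p < ε / 2}) ⁻¹' {A} =
        ⋂ p : htf.toFinset, {x : X | dist x (p : X) < ε / 2 ↔ p ∈ A} := by
      ext x
      simp [Set.ext_iff]
    rw [this]
    refine MeasurableSet.iInter fun p => ?_
    have hm : MeasurableSet {x : X | dist x p < ε / 2} := Metric.isOpen_ball.measurableSet
    by_cases hp : p ∈ A
    · simpa [hp] using hm
    · convert hm.compl using 1
      ext x
      simp [hp]
  · intro x y hxy
    obtain ⟨p, hp, hxp⟩ := Set.mem_iUnion₂.1 (ht (Set.mem_univ x))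
    have h1 : (⟨p, htf.mem_toFinset.2 hp⟩ : htf.toFinset) ∈
        {p : htf.toFinset | dist x p < ε / 2} := hxp
    have h2 : (⟨p, htf.mem_toFinset.2 hp⟩ : htf.toFinset) ∈
        {p : htf.toFinset | dist y p < ε / 2} := by
      simp only at hxy
      rw [← hxy]
      exact h1
    have h1' : dist x p < ε / 2 := h1
    have h2' : dist y p < ε / 2 := h2
    calc dist x y ≤ dist x p + dist y p := dist_triangle_right _ _ _
      _ < ε := by linarith

lemma upper_bound [CompactSpace X] [BorelSpace X] (ν : Measure X) [IsProbabilityMeasure ν]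
    {f : X → X} (hf : Ergodic f ν) {c : ℝ} (hc : ksEntropy f ν < c) {ε : ℝ} (hε : 0 < ε) :
    ∃ Z, MeasurableSet Z ∧ ν Z = 1 ∧ mZ f (fun _ => 0) Z c ε = 0 := by
  classical
  have hmp := hf.toMeasurePreserving
  obtain ⟨T, g, hg, hgε⟩ := exists_small_partition (X := X) hε
  obtain ⟨L, hL0, hL⟩ := ent_tendsto ν hmp hg
  have hLc : L < c := by
    have := le_ks ν hmp.measurable hg
    rw [liminf_coe hL] at this
    exact EReal.coe_lt_coe_iff.1 (lt_of_le_of_lt this hc)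
  obtain ⟨a, hLa, hac⟩ := exists_between hLc
  obtain ⟨b, hab, hbc⟩ := exists_between hac
  let P : ℕ → X → ℝ := fun n x => ν.real (nm f g n ⁻¹' {nm f g n x})
  have hPm : ∀ n, Measurable (P n) := fun n =>
    (hg.nm hmp.measurable n).comp_measurable (fun w => ν.real (nm f g n ⁻¹' {w}))
  have hPf : ∀ n x, P (n + 1) x ≤ P n (f x) := by
    intro n x
    simp only [P]
    rw [← hmp.measureReal_preimage ((hg.nm hmp.measurable n) _).nullMeasurableSet]
    refine measureReal_mono ?_
    intro y hy
    have hy' : nm f g (n + 1) y = nm f g (n + 1) x := hy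
    change nm f g n (f y) = nm f g n (f x)
    funext i
    exact congrFun hy' i.succ
  let A : Set X := {x | ∃ C : ℕ, ∀ N : ℕ, ∃ n : ℕ, N ≤ n ∧ Real.exp (-(n * a) - C) ≤ P n x}
  have hAm : MeasurableSet A := by
    have : A = ⋃ C : ℕ, ⋂ N : ℕ, ⋃ n : ℕ, ⋃ _ : N ≤ n, {x | Real.exp (-(n * a) - C) ≤ P n x} := by
      ext x
      simp [A]
    rw [this]
    exact MeasurableSet.iUnion fun C => MeasurableSet.iInter fun N => MeasurableSet.iUnion fun n =>
      MeasurableSet.iUnion fun _ => measurableSet_le measurable_const (hPm n)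
  have hAf : A ⊆ f ⁻¹' A := by
    rintro x ⟨C, hC⟩
    refine ⟨C + ⌈a⌉₊, fun N => ?_⟩
    obtain ⟨n, hn, hle⟩ := hC (N + 1)
    obtain ⟨m, rfl⟩ : ∃ m, n = m + 1 := ⟨n - 1, by omega⟩
    refine ⟨m, by omega, le_trans (le_trans (Real.exp_le_exp.2 ?_) hle) (hPf m x)⟩
    have := Nat.le_ceil a
    push_cast
    linarith
  have hA1 : ν A = 1 := by
    rcases hf.ae_empty_or_univ_of_ae_le_preimage hAm.nullMeasurableSet
      (Eventually.of_forall hAf) with h | h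
    · exfalso
      refine positive_set ν hmp hg hL0 hL hLa ?_
      have h0 : ν A = 0 := by rw [measure_congr h]; simp
      filter_upwards [measure_eq_zero_iff_ae_notMem.1 h0] with x hx
      simp only [A, Set.mem_ofPred_eq, not_exists, not_forall] at hx
      obtain ⟨N, hN⟩ := hx 0
      filter_upwards [eventually_ge_atTop N] with n hn
      have := hN n
      by_contra hcon
      refine this ⟨hn, ?_⟩
      simp only [Nat.cast_zero, sub_zero]
      exact not_lt.1 hcon
    · rw [measure_congr h]; simp
  refine ⟨A, hAm, hA1, cover_zero ν hmp.measurable hg hgε (by linarith) hbc ?_⟩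
  rintro x ⟨C, hC⟩ N
  obtain ⟨n, hn, hle⟩ := hC (max N ⌈C / (b - a)⌉₊)
  refine ⟨n, (le_max_left _ _).trans hn, le_trans (Real.exp_le_exp.2 ?_) hle⟩
  have h1 : (C : ℝ) / (b - a) ≤ n := (Nat.le_ceil _).trans (by
    exact_mod_cast (le_max_right _ _).trans hn)
  rw [div_le_iff₀ (by linarith)] at h1
  linarith

end Upper

end PaperAux


/-- Remark 4.8: if `μ₁, μ₂` are ergodic with `h_{μ₁}(f) > h_{μ₂}(f)` (and finite
`h_{μ₁}(f)`), then `μ = ½μ₁ + ½μ₂` is `f`-invariant, `E_μ(f) = h_{μ₁}(f)`,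
`h_μ(f) = ½(h_{μ₁}(f) + h_{μ₂}(f))`, and in particular `E_μ(f) > h_μ(f)`:
the inequality `E_μ(f) ≥ h_μ(f)` can be strict. -/
theorem entropyPressure_gt_entropy_of_average {X : Type*} [MetricSpace X] [CompactSpace X] [MeasurableSpace X] [BorelSpace X]
    (f : X → X) (hf : Continuous f)
    (μ₁ μ₂ : Measure X) (hp₁ : IsProbabilityMeasure μ₁) (hp₂ : IsProbabilityMeasure μ₂)
    (herg₁ : Ergodic f μ₁) (herg₂ : Ergodic f μ₂)
    (hfin : ksEntropy f μ₁ ≠ ⊤) (hlt : ksEntropy f μ₂ < ksEntropy f μ₁) :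
    MeasurePreserving f ((2 : ℝ≥0∞)⁻¹ • μ₁ + (2 : ℝ≥0∞)⁻¹ • μ₂)
      ((2 : ℝ≥0∞)⁻¹ • μ₁ + (2 : ℝ≥0∞)⁻¹ • μ₂) ∧
    Pmu f (fun _ => 0) ((2 : ℝ≥0∞)⁻¹ • μ₁ + (2 : ℝ≥0∞)⁻¹ • μ₂) = ksEntropy f μ₁ ∧
    ksEntropy f ((2 : ℝ≥0∞)⁻¹ • μ₁ + (2 : ℝ≥0∞)⁻¹ • μ₂) =
      (((1 : ℝ) / 2 : ℝ) : EReal) * (ksEntropy f μ₁ + ksEntropy f μ₂) ∧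
    ksEntropy f ((2 : ℝ≥0∞)⁻¹ • μ₁ + (2 : ℝ≥0∞)⁻¹ • μ₂) <
      Pmu f (fun _ => 0) ((2 : ℝ≥0∞)⁻¹ • μ₁ + (2 : ℝ≥0∞)⁻¹ • μ₂) := by
  have hm₁ := herg₁.toMeasurePreserving
  have hm₂ := herg₂.toMeasurePreserving
  have hP : Pmu f (fun _ => 0) ((2 : ℝ≥0∞)⁻¹ • μ₁ + (2 : ℝ≥0∞)⁻¹ • μ₂) = ksEntropy f μ₁ := by
    apply le_antisymm
    · refine iSup₂_le fun ε hε => ?_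
      refine le_of_forall_gt_imp_ge_of_dense fun d hd => ?_
      obtain ⟨c, hc, hcd⟩ := EReal.lt_iff_exists_real_btwn.1 hd
      obtain ⟨Z₁, hZm₁, hZ₁, hz₁⟩ := PaperAux.upper_bound μ₁ herg₁ hc hε
      obtain ⟨Z₂, hZm₂, hZ₂, hz₂⟩ := PaperAux.upper_bound μ₂ herg₂ (hlt.trans hc) hε
      have hu₁ : μ₁ (Z₁ ∪ Z₂) = 1 :=
        le_antisymm prob_le_one (hZ₁.symm.le.trans (measure_mono Set.subset_union_left))
      have hu₂ : μ₂ (Z₁ ∪ Z₂) = 1 :=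
        le_antisymm prob_le_one (hZ₂.symm.le.trans (measure_mono Set.subset_union_right))
      have hu : ((2 : ℝ≥0∞)⁻¹ • μ₁ + (2 : ℝ≥0∞)⁻¹ • μ₂) (Z₁ ∪ Z₂) = 1 := by
        simp [hu₁, hu₂, ENNReal.inv_two_add_inv_two]
      refine le_trans (iInf₂_le (Z₁ ∪ Z₂) ⟨hZm₁.union hZm₂, hu⟩) (le_trans ?_ hcd.le)
      exact iInf₂_le c (PaperAux.mZ_union hz₁ hz₂)
    · refine iSup₂_le fun s hs => ?_
      obtain ⟨g, hg, -, hdyn⟩ := PaperAux.exists_fun_of_part hs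
      obtain ⟨L, -, hL⟩ := PaperAux.ent_tendsto μ₁ hm₁ hg
      simp_rw [hdyn]
      rw [PaperAux.liminf_coe hL]
      refine EReal.ge_of_forall_gt_iff_ge.1 fun d hd => ?_
      have hdL : d < L := by exact_mod_cast hd
      obtain ⟨ε, hε, hlow⟩ := PaperAux.lower_bound μ₁ hf hm₁ hg (sub_pos.2 hdL)
      rw [PaperAux.liminf_coe hL] at hlow
      refine le_trans (le_iInf₂ fun Z hZ => le_iInf₂ fun α hα => ?_)
        (le_iSup₂ (f := fun (ε : ℝ) (_ : 0 < ε) => ⨅ (Z : Set X) (_ : MeasurableSet Z ∧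
          ((2 : ℝ≥0∞)⁻¹ • μ₁ + (2 : ℝ≥0∞)⁻¹ • μ₂) Z = 1), PZeps f (fun _ => 0) Z ε) ε hε)
      have hZ₁ : μ₁ Z = 1 := by
        have h := PaperAux.mix_real μ₁ μ₂ Z
        have h1 : (PaperAux.mix μ₁ μ₂).real Z = 1 := by
          rw [Measure.real, PaperAux.mix, hZ.2]
          simp
        have ha : μ₁.real Z ≤ 1 := measureReal_le_one
        have hb : μ₂.real Z ≤ 1 := measureReal_le_one
        have hc : μ₁.real Z = 1 := by linarith
        exact (ENNReal.toReal_eq_one_iff _).1 hc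
      have hle := EReal.coe_le_coe_iff.1 (hlow Z hZ₁ α hα)
      exact EReal.coe_le_coe_iff.2 (by linarith)
  have hn₁ := PaperAux.ks_nonneg μ₁ hm₁
  have hn₂ := PaperAux.ks_nonneg μ₂ hm₂
  obtain ⟨h₁, e₁⟩ : ∃ h : ℝ, ksEntropy f μ₁ = h :=
    ⟨_, (EReal.coe_toReal hfin (ne_bot_of_le_ne_bot EReal.zero_ne_bot hn₁)).symm⟩
  obtain ⟨h₂, e₂⟩ : ∃ h : ℝ, ksEntropy f μ₂ = h :=
    ⟨_, (EReal.coe_toReal (ne_top_of_lt hlt)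
      (ne_bot_of_le_ne_bot EReal.zero_ne_bot hn₂)).symm⟩
  have hK := PaperAux.ks_mix μ₁ μ₂ hm₁ hm₂ e₁ e₂
  refine ⟨PaperAux.mix_mp hm₁ hm₂, hP, ?_, ?_⟩
  · refine hK.trans ?_
    rw [e₁, e₂, ← EReal.coe_add, ← EReal.coe_mul]
    congr 1
    ring
  · rw [hP, e₁]
    refine lt_of_eq_of_lt hK ?_
    rw [e₁, e₂] at hlt
    have := EReal.coe_lt_coe_iff.1 hlt
    exact EReal.coe_lt_coe_iff.2 (by linarith)
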